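/- arXiv:1406.3844 — 6 statements merged into one kernel-verified Lean document; each statement's English description precedes it below -/
import Mathlib

section
/- Given an ordered sequence of r distinct integers d_1, d_2, …, d_r with r ≥ 2 and d_i ≥ 2 for all i, there exist a positive integer n and r connected circulant graphs G_1, G_2, …, G_r, each on n vertices, such that the distinguishing number of G_i equals d_i for every i. -/
/-!
The graph used for the label count `d` is the cycle `C_m` with every vertex blown up to an
independent set (a *fibre*) of size `k = d - 1`. On `ZMod (m * k)` it is the circulant graph whose
connection set consists of the `x` reducing to `±1` modulo `m`. For `m ≥ 6` its distinguishing
number is `k + 1`: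

* Two vertices of one fibre are twins, so a distinguishing labeling is injective on fibres and
  uses at least `k` labels. With exactly `k` labels each fibre is in bijection with the labels, and
  shifting to the next fibre while keeping the label is a nontrivial automorphism
  (`BlowUp.lower_bound`).
* With `k + 1` labels, let the fibres over `0, 1, 3` miss the label `0` and all others miss the
  label `k`. For `m ≥ 6` two vertices lie in one fibre iff they have the same neighbours, so an
  automorphism permutes the fibres, inducing an automorphism of `C_m` which preserves `{0, 1, 3}`
  if the labels are preserved. Such an automorphism is trivial (`cycle_rigid`), so every fibre is
  fixed, and then every vertex is (`BlowUp.upper_bound`).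

All the required graphs get the same order `n = 6 * ∏ i, (d i - 1)`, with `m = n / (d i - 1) ≥ 6`.
-/

/-- A permutation of the vertices is a graph automorphism if it preserves adjacency. -/
def IsGraphAut {V : Type*} (G : SimpleGraph V) (σ : Equiv.Perm V) : Prop :=
  ∀ u v : V, G.Adj (σ u) (σ v) ↔ G.Adj u v

/-- A labeling with `r` labels is distinguishing if no nontrivial automorphism preserves it. -/
def IsDistinguishing {V : Type*} (G : SimpleGraph V) {r : ℕ} (c : V → Fin r) : Prop :=
  ∀ σ : Equiv.Perm V, IsGraphAut G σ → (∀ v, c (σ v) = c v) → σ = Equiv.refl V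

/-- The distinguishing number of a graph: the least `r` admitting an `r`-distinguishing
labeling. -/
noncomputable def distinguishingNumber {V : Type*} (G : SimpleGraph V) : ℕ :=
  sInf {r : ℕ | ∃ c : V → Fin r, IsDistinguishing G c}

/-! ### Rigidity of the cycle with three marked vertices -/

theorem natCast_ne_zero_of_lt {m c : ℕ} (h0 : 0 < c) (hc : c < m) : (c : ZMod m) ≠ 0 := by
  rw [Ne, ZMod.natCast_eq_zero_iff]
  exact Nat.not_dvd_of_pos_of_lt h0 hc

/-- The marked vertex `3` is fixed, being the only one not adjacent to another marked vertex; `1`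
is fixed because it has a common neighbour with `3` while `0` has not. From two consecutive fixed
vertices the rest of the cycle follows by induction. -/
theorem cycle_rigid {m : ℕ} (hm : 6 ≤ m) (τ : ZMod m → ZMod m) (hinj : Function.Injective τ)
    (hadj : ∀ f g, (τ f - τ g = 1 ∨ τ f - τ g = -1) ↔ (f - g = 1 ∨ f - g = -1))
    (hP : ∀ f, (f = 0 ∨ f = 1 ∨ f = 3) → (τ f = 0 ∨ τ f = 1 ∨ τ f = 3)) (f : ZMod m) :
    τ f = f := by
  have : NeZero m := ⟨by omega⟩
  have n1 : (1 : ZMod m) ≠ 0 := by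
    exact_mod_cast natCast_ne_zero_of_lt (m := m) (c := 1) (by omega) (by omega)
  have n2 : (2 : ZMod m) ≠ 0 := by
    exact_mod_cast natCast_ne_zero_of_lt (m := m) (c := 2) (by omega) (by omega)
  have n3 : (3 : ZMod m) ≠ 0 := by
    exact_mod_cast natCast_ne_zero_of_lt (m := m) (c := 3) (by omega) (by omega)
  have n4 : (4 : ZMod m) ≠ 0 := by
    exact_mod_cast natCast_ne_zero_of_lt (m := m) (c := 4) (by omega) (by omega)
  have n5 : (5 : ZMod m) ≠ 0 := by
    exact_mod_cast natCast_ne_zero_of_lt (m := m) (c := 5) (by omega) (by omega)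
  have p0 := hP 0 (by simp)
  have p1 := hP 1 (by simp)
  have p3 := hP 3 (by simp)
  have i01 : τ 0 ≠ τ 1 := fun h => n1 (hinj h).symm
  have i03 : τ 0 ≠ τ 3 := fun h => n3 (hinj h).symm
  have i13 : τ 1 ≠ τ 3 := fun h => n2 (by linear_combination -(hinj h))
  have a10 : τ 1 - τ 0 = 1 ∨ τ 1 - τ 0 = -1 := (hadj 1 0).2 (by left; ring)
  have a21 : τ 2 - τ 1 = 1 ∨ τ 2 - τ 1 = -1 := (hadj 2 1).2 (by left; ring)
  have a32 : τ 3 - τ 2 = 1 ∨ τ 3 - τ 2 = -1 := (hadj 3 2).2 (by left; ring)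
  have t3 : τ 3 = 3 := by grind
  have t1 : τ 1 = 1 := by grind
  have t0 : τ 0 = 0 := by grind
  have key : ∀ j : ℕ, τ (j : ZMod m) = j ∧ τ ((j : ZMod m) + 1) = j + 1 := by
    intro j
    induction j with
    | zero => simp [t0, t1]
    | succ j ih =>
      obtain ⟨ih1, ih2⟩ := ih
      push_cast
      refine ⟨ih2, ?_⟩
      have h1 := (hadj ((j : ZMod m) + 1 + 1) (j + 1)).2 (by left; ring)
      have h2 : τ ((j : ZMod m) + 1 + 1) ≠ τ j := fun h => n2 (by linear_combination hinj h)
      rw [ih1] at h2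
      rw [ih2] at h1
      rcases h1 with h1 | h1
      · linear_combination h1
      · exact absurd (by linear_combination h1) h2
  have := (key f.val).1
  rwa [ZMod.natCast_zmod_val] at this

/-! ### The distinguishing number of a blown-up cycle -/

namespace BlowUp

variable {V : Type*} {m k : ℕ} {G : SimpleGraph V} (e : V ≃ ZMod m × Fin k)

/-- `G` is the blow-up of the cycle on `ZMod m` whose fibres have size `k`; the bijection `e` gives
the fibre of a vertex and its position there. -/
def IsBlowUp (G : SimpleGraph V) (e : V ≃ ZMod m × Fin k) : Prop :=
  ∀ u v, G.Adj u v ↔ ((e u).1 - (e v).1 = 1 ∨ (e u).1 - (e v).1 = -1)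

theorem lower_bound (hm : 6 ≤ m) (hk : 0 < k) (hG : IsBlowUp G e) {r : ℕ} (c : V → Fin r)
    (hc : IsDistinguishing G c) : k + 1 ≤ r := by
  classical
  have : NeZero m := ⟨by omega⟩
  have n1 : (1 : ZMod m) ≠ 0 := by
    exact_mod_cast natCast_ne_zero_of_lt (m := m) (c := 1) (by omega) (by omega)
  -- Swapping two equally labeled vertices of one fibre is a label-preserving automorphism.
  have hfib : ∀ u v, (e u).1 = (e v).1 → c u = c v → u = v := by
    intro u v huv hcuv
    have hq : ∀ w, (e (Equiv.swap u v w)).1 = (e w).1 := by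
      intro w
      rw [Equiv.swap_apply_def]
      split_ifs with h1 h2
      · rw [h1, huv]
      · rw [h2, huv]
      · rfl
    have h := hc (Equiv.swap u v) (fun x y => by rw [hG, hG, hq, hq]) (fun w => by
      rw [Equiv.swap_apply_def]
      split_ifs with h1 h2
      · rw [h1, hcuv]
      · rw [h2, hcuv]
      · rfl)
    exact Equiv.swap_eq_refl_iff.1 h
  let F : ZMod m × Fin k → ZMod m × Fin r := fun p => (p.1, c (e.symm p))
  have hF : Function.Injective F := by
    intro p p' h
    have h' := Prod.mk.inj h
    exact e.symm.injective (hfib _ _ (by simpa using h'.1) h'.2)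
  by_contra hlt
  have hcard := Fintype.card_le_of_injective F hF
  simp only [Fintype.card_prod, ZMod.card, Fintype.card_fin] at hcard
  have hkr : k ≤ r := Nat.le_of_mul_le_mul_left hcard (by omega)
  obtain rfl : r = k := by omega
  have hFb : Function.Bijective F := Finite.injective_iff_bijective.1 hF
  let E := Equiv.ofBijective F hFb
  let s : ZMod m × Fin r ≃ ZMod m × Fin r :=
    (Equiv.addRight (1 : ZMod m)).prodCongr (Equiv.refl _)
  let σ : Equiv.Perm V := e.trans (E.trans (s.trans (E.symm.trans e.symm)))
  have hσ : ∀ v, F (e (σ v)) = ((e v).1 + 1, c v) := by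
    intro v
    change E (e (σ v)) = _
    simp [σ, s, E, F]
  have hσ1 : ∀ v, (e (σ v)).1 = (e v).1 + 1 := fun v => congrArg Prod.fst (hσ v)
  have hσ2 : ∀ v, c (σ v) = c v := fun v => by simpa [F] using congrArg Prod.snd (hσ v)
  have h := hc σ (fun x y => by rw [hG, hG, hσ1, hσ1, add_sub_add_right_eq_sub]) hσ2
  have h0 := hσ1 (e.symm (0, ⟨0, hk⟩))
  rw [h] at h0
  exact n1 (Eq.symm (by simpa using h0))

theorem same_fibre_iff (hm : 6 ≤ m) (hk : 0 < k) (hG : IsBlowUp G e) (u v : V) :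
    (e u).1 = (e v).1 ↔ ∀ w, G.Adj w u ↔ G.Adj w v := by
  have n4 : (4 : ZMod m) ≠ 0 := by
    exact_mod_cast natCast_ne_zero_of_lt (m := m) (c := 4) (by omega) (by omega)
  constructor
  · intro h w
    rw [hG, hG, h]
  · intro h
    have h1 := (h (e.symm ((e u).1 + 1, ⟨0, hk⟩))).1 (by rw [hG]; simp)
    have h2 := (h (e.symm ((e u).1 - 1, ⟨0, hk⟩))).1 (by rw [hG]; simp)
    rw [hG] at h1 h2
    simp only [Equiv.apply_symm_apply] at h1 h2
    grind

open Classical in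
/-- The labeling with `k + 1` labels in which the fibres over `0, 1, 3` miss the label `0` and all
other fibres miss the label `k`. -/
noncomputable def labeling (v : V) : Fin (k + 1) :=
  if (e v).1 = 0 ∨ (e v).1 = 1 ∨ (e v).1 = 3 then (e v).2.succ else (e v).2.castSucc

theorem upper_bound (hm : 6 ≤ m) (hk : 0 < k) (hG : IsBlowUp G e) :
    IsDistinguishing G (labeling e) := by
  intro σ hσ hl
  have hfib : ∀ u v, (e (σ u)).1 = (e (σ v)).1 ↔ (e u).1 = (e v).1 := by
    intro u v
    rw [same_fibre_iff e hm hk hG, same_fibre_iff e hm hk hG, ← σ.forall_congr_right]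
    simp only [hσ _ _]
  let τ : ZMod m → ZMod m := fun f => (e (σ (e.symm (f, ⟨0, hk⟩)))).1
  have hτ : ∀ v, (e (σ v)).1 = τ (e v).1 := fun v => (hfib _ _).2 (by simp)
  have hid : ∀ f, τ f = f := by
    refine cycle_rigid hm τ ?_ ?_ ?_
    · intro f g h
      simpa using (hfib _ _).1 h
    · intro f g
      have h := hσ (e.symm (f, ⟨0, hk⟩)) (e.symm (g, ⟨0, hk⟩))
      rw [hG, hG] at h
      simpa using h
    · -- A fibre over `0, 1, 3` contains the label `k`, which is absent from all other fibres.
      intro f hf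
      by_contra hcon
      have h := hl (e.symm (f, ⟨k - 1, by omega⟩))
      unfold labeling at h
      rw [hτ] at h
      simp only [Equiv.apply_symm_apply] at h
      rw [if_neg hcon, if_pos hf, Fin.ext_iff] at h
      simp only [Fin.val_castSucc, Fin.val_succ] at h
      have := (e (σ (e.symm (f, ⟨k - 1, by omega⟩)))).2.isLt
      omega
  ext v
  have h1 : (e (σ v)).1 = (e v).1 := by rw [hτ, hid]
  have h2 := hl v
  unfold labeling at h2
  rw [h1] at h2
  refine e.injective (Prod.ext h1 ?_)
  split_ifs at h2
  · exact Fin.succ_injective _ h2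
  · exact Fin.castSucc_injective _ h2

theorem distinguishingNumber_eq (hm : 6 ≤ m) (hk : 0 < k) (hG : IsBlowUp G e) :
    distinguishingNumber G = k + 1 := by
  have hmem : k + 1 ∈ {r : ℕ | ∃ c : V → Fin r, IsDistinguishing G c} :=
    ⟨_, upper_bound e hm hk hG⟩
  refine le_antisymm (Nat.sInf_le hmem) (le_csInf ⟨_, hmem⟩ ?_)
  rintro r ⟨c, hc⟩
  exact lower_bound e hm hk hG c hc

end BlowUp

/-! ### Blown-up cycles as circulant graphs -/

theorem exists_circulant {n m k : ℕ} (hn : n = m * k) (hm : 6 ≤ m) (hk : 0 < k) :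
    ∃ A : Set (ZMod n), (0 : ZMod n) ∉ A ∧ (∀ a ∈ A, -a ∈ A) ∧
      (SimpleGraph.circulantGraph A).Connected ∧
      distinguishingNumber (SimpleGraph.circulantGraph A) = k + 1 := by
  have : NeZero m := ⟨by omega⟩
  have hn0 : 0 < n := by rw [hn]; positivity
  have : NeZero n := ⟨by omega⟩
  have n1 : (1 : ZMod m) ≠ 0 := by
    exact_mod_cast natCast_ne_zero_of_lt (m := m) (c := 1) (by omega) (by omega)
  let q : ZMod n →+* ZMod m := ZMod.castHom ⟨k, hn⟩ (ZMod m)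
  have hq : ∀ v, q v = (v.val : ZMod m) := fun v => by
    conv_lhs => rw [← ZMod.natCast_zmod_val v]
    exact map_natCast q _
  let A : Set (ZMod n) := {x | q x = 1 ∨ q x = -1}
  have hA0 : (0 : ZMod n) ∉ A := by
    simp only [A, Set.mem_ofPred_eq, map_zero]
    rintro (h | h)
    · exact n1 h.symm
    · exact n1 (by linear_combination h)
  have hAneg : ∀ a ∈ A, -a ∈ A := by
    rintro a (h | h)
    · right; rw [map_neg, h]
    · left; rw [map_neg, h, neg_neg]
  have hadj : ∀ u v, (SimpleGraph.circulantGraph A).Adj u v ↔ u - v ∈ A := by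
    intro u v
    rw [SimpleGraph.circulantGraph, SimpleGraph.fromRel_adj]
    constructor
    · rintro ⟨-, h | h⟩
      · exact h
      · simpa using hAneg _ h
    · intro h
      refine ⟨?_, Or.inl h⟩
      rintro rfl
      exact hA0 (by simpa using h)
  refine ⟨A, hA0, hAneg, ?_, ?_⟩
  · have hreach : ∀ j : ℕ, (SimpleGraph.circulantGraph A).Reachable 0 (j : ZMod n) := by
      intro j
      induction j with
      | zero => simp
      | succ j ih =>
        refine ih.trans (SimpleGraph.Adj.reachable ?_)
        rw [hadj]
        right
        simp
    have hr : ∀ v, (SimpleGraph.circulantGraph A).Reachable 0 v := fun v => by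
      simpa using hreach v.val
    exact SimpleGraph.Connected.mk fun u v => (hr u).symm.trans (hr v)
  · let g : ZMod n → ZMod m × Fin k := fun v =>
      (q v, ⟨v.val / m, Nat.div_lt_of_lt_mul (by rw [← hn]; exact v.val_lt)⟩)
    have hg : Function.Bijective g := by
      rw [Fintype.bijective_iff_injective_and_card]
      refine ⟨fun u v h => ?_, by simp [ZMod.card, hn]⟩
      have h' := Prod.mk.inj h
      have h1 : u.val % m = v.val % m := by
        have := h'.1
        rw [hq, hq] at this
        exact (ZMod.natCast_eq_natCast_iff _ _ _).1 this
      have h2 : u.val / m = v.val / m := by simpa using h'.2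
      apply ZMod.val_injective n
      rw [← Nat.div_add_mod u.val m, ← Nat.div_add_mod v.val m, h1, h2]
    refine BlowUp.distinguishingNumber_eq (Equiv.ofBijective g hg) hm hk fun u v => ?_
    rw [hadj]
    simp [A, g]

theorem stmt_1 (r : ℕ) (hr : 2 ≤ r) (d : Fin r → ℕ)
    (hdist : Function.Injective d) (hd2 : ∀ i, 2 ≤ d i) :
    ∃ n : ℕ, 0 < n ∧ ∃ A : Fin r → Set (ZMod n),
      ∀ i, (0 : ZMod n) ∉ A i ∧ (∀ a ∈ A i, -a ∈ A i) ∧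
        (SimpleGraph.circulantGraph (A i)).Connected ∧
        distinguishingNumber (SimpleGraph.circulantGraph (A i)) = d i := by
  have hpos : 0 < ∏ i, (d i - 1) :=
    Finset.prod_pos fun i _ => by have := hd2 i; omega
  refine ⟨6 * ∏ i, (d i - 1), by omega, ?_⟩
  have h : ∀ i, ∃ A : Set (ZMod (6 * ∏ i, (d i - 1))), (0 : ZMod _) ∉ A ∧ (∀ a ∈ A, -a ∈ A) ∧
      (SimpleGraph.circulantGraph A).Connected ∧
      distinguishingNumber (SimpleGraph.circulantGraph A) = d i := by
    intro i
    obtain ⟨t, ht⟩ := Finset.dvd_prod_of_mem (fun i => d i - 1) (Finset.mem_univ i)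
    have ht0 : 0 < t := Nat.pos_of_ne_zero fun h0 => by simp only [h0] at ht; omega
    have hi := hd2 i
    have := exists_circulant (n := 6 * ∏ i, (d i - 1)) (m := 6 * t) (k := d i - 1)
      (by rw [ht]; ring) (by omega) (by omega)
    rwa [Nat.sub_add_cancel (by omega)] at this
  choose A hA using h
  exact ⟨A, hA⟩
end

section
/- Let G be a finite graph and M a module of G. Then the distinguishing number of G is at least the distinguishing number of the subgraph of G induced on M, i.e. D(G) ≥ D(G[M]). -/
/-- `M` is a module of `G`: every vertex outside `M` is adjacent to all of `M` or to
none of `M`. -/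
def SimpleGraph.IsModuleSet {V : Type*} (G : SimpleGraph V) (M : Set V) : Prop :=
  ∀ y ∉ M, (∀ x ∈ M, G.Adj x y) ∨ (∀ x ∈ M, ¬ G.Adj x y)

/-- A vertex outside a module does not separate two vertices of the module. -/
lemma SimpleGraph.IsModuleSet.adj_iff {V : Type*} {G : SimpleGraph V} {M : Set V}
    (hM : G.IsModuleSet M) {x x' y : V} (hx : x ∈ M) (hx' : x' ∈ M) (hy : y ∉ M) :
    G.Adj x y ↔ G.Adj x' y := by
  rcases hM y hy with h | h
  · exact iff_of_true (h x hx) (h x' hx')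
  · exact iff_of_false (h x hx) (h x' hx')

open Classical in
lemma IsGraphAut.ofSubtype {V : Type*} {G : SimpleGraph V} {M : Set V}
    (hM : G.IsModuleSet M) {τ : Equiv.Perm M} (hτ : IsGraphAut (SimpleGraph.induce M G) τ) :
    IsGraphAut G (Equiv.Perm.ofSubtype τ) := by
  intro u v
  by_cases hu : u ∈ M <;> by_cases hv : v ∈ M
  · rw [Equiv.Perm.ofSubtype_apply_of_mem τ hu, Equiv.Perm.ofSubtype_apply_of_mem τ hv]
    exact hτ ⟨u, hu⟩ ⟨v, hv⟩
  · rw [Equiv.Perm.ofSubtype_apply_of_mem τ hu, Equiv.Perm.ofSubtype_apply_of_not_mem τ hv]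
    exact hM.adj_iff (τ ⟨u, hu⟩).2 hu hv
  · rw [Equiv.Perm.ofSubtype_apply_of_not_mem τ hu, Equiv.Perm.ofSubtype_apply_of_mem τ hv,
      G.adj_comm, G.adj_comm u]
    exact hM.adj_iff (τ ⟨v, hv⟩).2 hv hu
  · rw [Equiv.Perm.ofSubtype_apply_of_not_mem τ hu, Equiv.Perm.ofSubtype_apply_of_not_mem τ hv]

open Classical in
lemma IsDistinguishing.restrict {V : Type*} {G : SimpleGraph V} {M : Set V}
    (hM : G.IsModuleSet M) {r : ℕ} {c : V → Fin r} (hc : IsDistinguishing G c) :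
    IsDistinguishing (SimpleGraph.induce M G) (fun x : M => c x) := by
  intro τ hτ hcτ
  have h := hc (Equiv.Perm.ofSubtype τ) (IsGraphAut.ofSubtype hM hτ) fun v => by
    by_cases hv : v ∈ M
    · rw [Equiv.Perm.ofSubtype_apply_of_mem τ hv]
      exact hcτ ⟨v, hv⟩
    · rw [Equiv.Perm.ofSubtype_apply_of_not_mem τ hv]
  ext x
  rw [← Equiv.Perm.ofSubtype_apply_coe τ x, h]
  rfl

/-- Giving all vertices different labels distinguishes, so the set of admissible `r` is nonempty. -/
lemma exists_isDistinguishing {V : Type*} [Fintype V] (G : SimpleGraph V) :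
    {r : ℕ | ∃ c : V → Fin r, IsDistinguishing G c}.Nonempty :=
  ⟨Fintype.card V, Fintype.equivFin V, fun _ _ h =>
    Equiv.ext fun v => (Fintype.equivFin V).injective (h v)⟩

theorem stmt_2 {V : Type*} [Fintype V] (G : SimpleGraph V) (M : Set V)
    (hM : G.IsModuleSet M) :
    distinguishingNumber (SimpleGraph.induce M G) ≤ distinguishingNumber G := by
  obtain ⟨c, hc⟩ := Nat.sInf_mem (exists_isDistinguishing G)
  exact Nat.sInf_le ⟨fun x : M => c x, hc.restrict hM⟩
end

section
/- For all integers m ≥ 2 and p ≥ 2, the sets M_i = {i + r·p : 0 ≤ r ≤ m−1} for i = 0, 1, …, p−1 form a partition of the vertex set ℤ_{mp} of the circulant graph C(m,p) into p sets, each of size m, each an independent set, and each a module of C(m,p). -/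
/-- The jump set `A = {p-1+r·p, p+1+r·p : 0 ≤ r ≤ m-1}` inside `ℤ_{mp}`. -/
def jumpSet (m p : ℕ) : Set (ZMod (m * p)) :=
  {a | ∃ r < m, a = ((p - 1 + r * p : ℕ) : ZMod (m * p)) ∨
                a = ((p + 1 + r * p : ℕ) : ZMod (m * p))}

/-- The circulant graph `C(m,p)` on vertex set `ℤ_{mp}`: `i` and `j` are adjacent iff
`j - i (mod mp)` lies in the jump set. -/
def circC (m p : ℕ) : SimpleGraph (ZMod (m * p)) :=
  SimpleGraph.circulantGraph (jumpSet m p)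

/-- The set `M_i = {i + r·p : 0 ≤ r ≤ m-1}` in `ℤ_{mp}`. -/
def Mset (m p i : ℕ) : Set (ZMod (m * p)) :=
  {v | ∃ r < m, v = ((i + r * p : ℕ) : ZMod (m * p))}

/-- Reduction modulo `p`, from `ℤ_{mp}` to `ℤ_p`. -/
def residue (m p : ℕ) : ZMod (m * p) →+* ZMod p :=
  ZMod.castHom (Dvd.intro_left m rfl) (ZMod p)

/-- `M_i` is the fibre of `residue` over `i`. The index `i` is not assumed to be less than `p`, so
that the lemma also describes the two halves `M_{p-1}` and `M_{p+1}` of the jump set. -/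
lemma mem_Mset_iff {m p : ℕ} (hm : 2 ≤ m) (hp : 2 ≤ p) (i : ℕ) (v : ZMod (m * p)) :
    v ∈ Mset m p i ↔ residue m p v = (i : ZMod p) := by
  have : NeZero (m * p) := ⟨by positivity⟩
  constructor
  · rintro ⟨r, -, rfl⟩
    rw [map_natCast]
    simp
  · intro h
    have hw : (((v - i).val : ℕ) : ZMod (m * p)) = v - i := ZMod.natCast_zmod_val _
    have hdvd : p ∣ (v - i).val := by
      rw [← ZMod.natCast_eq_zero_iff, ← map_natCast (residue m p), hw, map_sub, map_natCast, h,
        sub_self]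
    obtain ⟨r, hr⟩ := hdvd
    have hlt : (v - i).val < m * p := ZMod.val_lt _
    refine ⟨r, ?_, ?_⟩
    · rw [hr, mul_comm p r] at hlt
      exact lt_of_mul_lt_mul_right hlt (Nat.zero_le p)
    · rw [Nat.cast_add, mul_comm r p, ← hr, hw]
      ring

lemma mem_jumpSet_iff {m p : ℕ} (hm : 2 ≤ m) (hp : 2 ≤ p) (a : ZMod (m * p)) :
    a ∈ jumpSet m p ↔ residue m p a = -1 ∨ residue m p a = 1 := by
  have h1 : a ∈ jumpSet m p ↔ a ∈ Mset m p (p - 1) ∨ a ∈ Mset m p (p + 1) := by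
    simp only [jumpSet, Mset, Set.mem_ofPred_eq, ← exists_or, and_or_left]
  rw [h1, mem_Mset_iff hm hp, mem_Mset_iff hm hp, Nat.cast_sub (by omega)]
  simp

/-- Adjacency in `C(m,p)` depends only on residues modulo `p`. -/
lemma circC_adj_iff {m p : ℕ} (hm : 2 ≤ m) (hp : 2 ≤ p) (u v : ZMod (m * p)) :
    (circC m p).Adj u v ↔
      residue m p u - residue m p v = -1 ∨ residue m p u - residue m p v = 1 := by
  have : Fact (1 < p) := ⟨hp⟩
  have hswap : residue m p v - residue m p u = -(residue m p u - residue m p v) := by ring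
  simp only [circC, SimpleGraph.circulantGraph, SimpleGraph.fromRel_adj, mem_jumpSet_iff hm hp,
    map_sub, hswap, neg_eq_iff_eq_neg, neg_neg]
  constructor
  · tauto
  · refine fun h => ⟨?_, Or.inl h⟩
    rintro rfl
    simp at h

lemma ncard_Mset {m p : ℕ} (hp : 2 ≤ p) (i : ℕ) : (Mset m p i).ncard = m := by
  have himage : Mset m p i =
      Set.image (fun r : ℕ => ((i + r * p : ℕ) : ZMod (m * p))) (Finset.range m : Set ℕ) := by
    ext v
    simp [Mset, eq_comm]
  rw [himage, Set.InjOn.ncard_image, Set.ncard_coe_finset, Finset.card_range]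
  intro r hr s hs h
  simp only [Finset.coe_range, Set.mem_Iio] at hr hs
  have hmod : r * p ≡ s * p [MOD m * p] :=
    Nat.ModEq.add_left_cancel' i ((ZMod.natCast_eq_natCast_iff _ _ _).1 h)
  exact (Nat.ModEq.mul_right_cancel' (by omega) hmod).eq_of_lt_of_lt hr hs

theorem stmt_3 (m p : ℕ) (hm : 2 ≤ m) (hp : 2 ≤ p) :
    (∀ i < p, (Mset m p i).ncard = m ∧
      (∀ u ∈ Mset m p i, ∀ v ∈ Mset m p i, ¬ (circC m p).Adj u v) ∧
      (circC m p).IsModuleSet (Mset m p i)) ∧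
    (∀ i < p, ∀ j < p, i ≠ j → Disjoint (Mset m p i) (Mset m p j)) ∧
    (⋃ i < p, Mset m p i) = Set.univ := by
  have : Fact (1 < p) := ⟨hp⟩
  refine ⟨fun i _ => ⟨ncard_Mset hp i, ?_, ?_⟩, ?_, ?_⟩
  · intro u hu v hv
    rw [mem_Mset_iff hm hp] at hu hv
    rw [circC_adj_iff hm hp, hu, hv]
    simp
  · intro y _
    by_cases h : (i : ZMod p) - residue m p y = -1 ∨ (i : ZMod p) - residue m p y = 1
    · refine Or.inl fun x hx => ?_
      rwa [circC_adj_iff hm hp, (mem_Mset_iff hm hp i x).1 hx]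
    · refine Or.inr fun x hx => ?_
      rwa [circC_adj_iff hm hp, (mem_Mset_iff hm hp i x).1 hx]
  · intro i hi j hj hij
    refine Set.disjoint_left.2 fun v hvi hvj => hij ?_
    rw [mem_Mset_iff hm hp] at hvi hvj
    exact ((ZMod.natCast_eq_natCast_iff _ _ _).1 (hvi.symm.trans hvj)).eq_of_lt_of_lt hi hj
  · refine Set.eq_univ_of_forall fun v => ?_
    have : NeZero p := ⟨by omega⟩
    simp only [Set.mem_iUnion, exists_prop]
    exact ⟨(residue m p v).val, ZMod.val_lt _,
      (mem_Mset_iff hm hp _ v).2 (ZMod.natCast_zmod_val _).symm⟩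
end

section
/- Let m ≥ 2 and p ≥ 2 be integers. In the circulant graph C(m,p), for every vertex i with 1 ≤ i ≤ p−1, the graph distance from vertex 0 to vertex i equals i if 1 ≤ i ≤ ⌊p/2⌋, and equals p − i if ⌊p/2⌋ < i ≤ p−1. -/
theorem circC_adj_succ {m p : ℕ} (hm : 2 ≤ m) (hp : 2 ≤ p) (u : ZMod (m * p)) :
    (circC m p).Adj u (u + 1) := by
  have hmp : 4 ≤ m * p := by nlinarith
  have : Fact (1 < m * p) := ⟨by omega⟩
  refine ⟨by simp, Or.inr ⟨m - 1, by omega, Or.inr ?_⟩⟩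
  obtain ⟨k, rfl⟩ : ∃ k, m = k + 1 := ⟨m - 1, by omega⟩
  have h : (((k + 1) * p : ℕ) : ZMod ((k + 1) * p)) = 0 := ZMod.natCast_self _
  have e : p + 1 + (k + 1 - 1) * p = (k + 1) * p + 1 := by
    rw [Nat.add_sub_cancel]; ring
  rw [e, Nat.cast_add, h]
  simp

theorem circC_exists_walk {m p : ℕ} (hm : 2 ≤ m) (hp : 2 ≤ p) (u : ZMod (m * p)) (n : ℕ) :
    ∃ w : (circC m p).Walk u (u + n), w.length = n := by
  induction n with
  | zero => exact ⟨SimpleGraph.Walk.nil.copy rfl (by simp), by simp⟩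
  | succ n ih =>
    obtain ⟨w, hw⟩ := ih
    exact ⟨(w.concat (circC_adj_succ hm hp _)).copy rfl (by push_cast; ring), by simp [hw]⟩

theorem circC_adj_pred {m p : ℕ} (hm : 2 ≤ m) (hp : 2 ≤ p) :
    (circC m p).Adj 0 ((p - 1 : ℕ) : ZMod (m * p)) := by
  refine ⟨fun h => ?_, Or.inr ⟨0, by omega, Or.inl (by simp)⟩⟩
  have h' := (ZMod.natCast_eq_zero_iff _ _).1 h.symm
  have := Nat.le_of_dvd (by omega) h'
  have : 1 * p ≤ m * p := Nat.mul_le_mul_right _ (by omega)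
  omega

/-- The jump set reduces mod `p` to `{-1, 1}`. -/
theorem jumpSet_residue {m p : ℕ} (hp : 2 ≤ p) {a : ZMod (m * p)} (ha : a ∈ jumpSet m p) :
    ZMod.castHom (dvd_mul_left p m) (ZMod p) a = -1 ∨
      ZMod.castHom (dvd_mul_left p m) (ZMod p) a = 1 := by
  obtain ⟨r, -, rfl | rfl⟩ := ha
  · left
    rw [map_natCast]
    push_cast [Nat.cast_sub (show 1 ≤ p by omega)]
    simp
  · right
    rw [map_natCast]
    simp

/-- A walk of length `n` changes the residue mod `p` by at most `n` in absolute value. -/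
theorem circC_walk_residue {m p : ℕ} (hp : 2 ≤ p) {u v : ZMod (m * p)}
    (w : (circC m p).Walk u v) :
    ∃ k : ℤ, |k| ≤ w.length ∧
      ZMod.castHom (dvd_mul_left p m) (ZMod p) v =
        ZMod.castHom (dvd_mul_left p m) (ZMod p) u + k := by
  induction w with
  | nil => exact ⟨0, by simp, by simp⟩
  | @cons u v x h w ih =>
    obtain ⟨k, hk, e⟩ := ih
    have key : ∃ j : ℤ, |j| ≤ 1 ∧ ZMod.castHom (dvd_mul_left p m) (ZMod p) v =
        ZMod.castHom (dvd_mul_left p m) (ZMod p) u + j := by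
      rcases h.2 with h | h <;> rcases jumpSet_residue hp h with h | h <;> rw [map_sub] at h
      · exact ⟨1, by simp, by push_cast; linear_combination -h⟩
      · exact ⟨-1, by simp, by push_cast; linear_combination -h⟩
      · exact ⟨-1, by simp, by push_cast; linear_combination h⟩
      · exact ⟨1, by simp, by push_cast; linear_combination h⟩
    obtain ⟨j, hj, e'⟩ := key
    refine ⟨j + k, ?_, by rw [e, e']; push_cast; ring⟩
    rw [SimpleGraph.Walk.length_cons]
    push_cast
    linarith [abs_add_le j k]

theorem stmt_8 (m p : ℕ) (hm : 2 ≤ m) (hp : 2 ≤ p) (i : ℕ) (h1 : 1 ≤ i) (h2 : i ≤ p - 1) :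
    (circC m p).dist 0 ((i : ℕ) : ZMod (m * p)) = if i ≤ p / 2 then i else p - i := by
  have up : (circC m p).dist 0 (i : ZMod (m * p)) ≤ i := by
    obtain ⟨w, hw⟩ := circC_exists_walk hm hp 0 i
    simpa [hw] using SimpleGraph.dist_le (w.copy rfl (zero_add _))
  have up' : (circC m p).dist 0 (i : ZMod (m * p)) ≤ p - i := by
    obtain ⟨w, hw⟩ := circC_exists_walk hm hp (i : ZMod (m * p)) (p - 1 - i)
    have e : (i : ZMod (m * p)) + (p - 1 - i : ℕ) = (p - 1 : ℕ) := by
      rw [← Nat.cast_add]; congr 1; omega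
    have := SimpleGraph.dist_le
      (SimpleGraph.Walk.cons (circC_adj_pred hm hp) (w.copy rfl e).reverse)
    simp [hw] at this
    omega
  have low : i ≤ (circC m p).dist 0 (i : ZMod (m * p)) ∨
      p - i ≤ (circC m p).dist 0 (i : ZMod (m * p)) := by
    have hr : (circC m p).Reachable 0 (i : ZMod (m * p)) := by
      obtain ⟨w, -⟩ := circC_exists_walk hm hp 0 i
      rw [zero_add] at w
      exact ⟨w⟩
    obtain ⟨w, hw⟩ := hr.exists_walk_length_eq_dist
    obtain ⟨k, hk, e⟩ := circC_walk_residue hp w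
    rw [hw, abs_le] at hk
    rw [map_natCast, map_zero, zero_add, ← Int.cast_natCast,
      ZMod.intCast_eq_intCast_iff_dvd_sub] at e
    obtain ⟨c, hc⟩ := e
    -- `k = i + p c`, so `k ≥ i` when `c ≥ 0`, and `k ≤ i - p` when `c < 0`.
    rcases le_or_gt 0 c with h | h
    · left
      have : (0 : ℤ) ≤ p * c := by positivity
      omega
    · right
      have : (p : ℤ) * c ≤ p * (-1) := by gcongr; omega
      omega
  split_ifs <;> omega
end

section
/- For every integer m ≥ 2, the distinguishing number of the circulant graph C(m,4) equals 2m + 1. -/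
lemma mem_jumpSet_four_iff {m : ℕ} [NeZero (m * 4)] (a : ZMod (m * 4)) :
    a ∈ jumpSet m 4 ↔ a.val % 2 = 1 := by
  have hlt := ZMod.val_lt a
  constructor
  · rintro ⟨r, hr, h | h⟩ <;>
    · rw [h, ZMod.val_natCast, Nat.mod_mod_of_dvd _ (Dvd.intro_left (m * 2) (by ring))]
      omega
  · intro h
    obtain h3 | h1 : a.val % 4 = 3 ∨ a.val % 4 = 1 := by omega
    · refine ⟨a.val / 4, by omega, Or.inl ?_⟩
      conv_lhs => rw [← ZMod.natCast_zmod_val a]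
      congr 1
      omega
    · by_cases h0 : a.val = 1
      -- `1` is the jump `4 + 1 + (m - 1) * 4 = m * 4 + 1` reduced mod `m * 4`
      · refine ⟨m - 1, by omega, Or.inr ?_⟩
        have e : 4 + 1 + (m - 1) * 4 = m * 4 + 1 := by omega
        conv_lhs => rw [← ZMod.natCast_zmod_val a]
        rw [h0, e, Nat.cast_add (m * 4) 1, ZMod.natCast_self, zero_add]
      · refine ⟨a.val / 4 - 1, by omega, Or.inr ?_⟩
        conv_lhs => rw [← ZMod.natCast_zmod_val a]
        congr 1
        omega

lemma val_sub_mod_two {m : ℕ} [NeZero (m * 4)] (u v : ZMod (m * 4)) :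
    (u - v).val % 2 = (u.val + v.val) % 2 := by
  have h : u.val = (v.val + (u - v).val) % (m * 4) := by
    rw [← ZMod.val_add, add_sub_cancel]
  have h2 : u.val % 2 = (v.val + (u - v).val) % 2 := by
    rw [h, Nat.mod_mod_of_dvd _ (Dvd.intro_left (m * 2) (by ring))]
  omega

/-- `C(m,4)` is complete bipartite, with the even and the odd vertices as its sides. -/
lemma circC_adj_iff_s10 {m : ℕ} [NeZero (m * 4)] (u v : ZMod (m * 4)) :
    (circC m 4).Adj u v ↔ u.val % 2 ≠ v.val % 2 := by
  have huv := val_sub_mod_two u v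
  have hvu := val_sub_mod_two v u
  simp only [circC, SimpleGraph.circulantGraph, SimpleGraph.fromRel_adj, mem_jumpSet_four_iff]
  constructor
  · rintro ⟨_, h⟩
    omega
  · intro h
    exact ⟨fun e => h (by rw [e]), Or.inl (by omega)⟩

lemma IsDistinguishing.inj_on_side {m r : ℕ} [NeZero (m * 4)] {c : ZMod (m * 4) → Fin r}
    (hc : IsDistinguishing (circC m 4) c) {u v : ZMod (m * 4)}
    (hp : u.val % 2 = v.val % 2) (h : c u = c v) : u = v := by
  have hside : ∀ w, (Equiv.swap u v w).val % 2 = w.val % 2 := by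
    intro w
    rw [Equiv.swap_apply_def]
    split_ifs with h1 h2
    · rw [h1, hp]
    · rw [h2, hp]
    · rfl
  have hs := hc (Equiv.swap u v)
    (fun a b => by rw [circC_adj_iff_s10, circC_adj_iff_s10, hside, hside])
    (fun w => by
      rw [Equiv.swap_apply_def]
      split_ifs with h1 h2
      · rw [h1, h]
      · rw [h2, h]
      · rfl)
  have := congrArg (fun e : Equiv.Perm _ => e u) hs
  simpa using this.symm

/-- The `i`-th vertex of the side of parity `b`. -/
def sideVertex (m : ℕ) (b : Fin 2) (i : Fin (2 * m)) : ZMod (m * 4) :=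
  ((2 * i.val + b.val : ℕ) : ZMod (m * 4))

lemma val_sideVertex (m : ℕ) (b : Fin 2) (i : Fin (2 * m)) :
    (sideVertex m b i).val = 2 * i.val + b.val :=
  ZMod.val_natCast_of_lt (by omega)

lemma IsDistinguishing.injective_side {m r : ℕ} [NeZero (m * 4)] {c : ZMod (m * 4) → Fin r}
    (hc : IsDistinguishing (circC m 4) c) (b : Fin 2) :
    Function.Injective (fun i => c (sideVertex m b i)) := by
  intro i j hij
  have h := congrArg ZMod.val (hc.inj_on_side
    (by rw [val_sideVertex, val_sideVertex]; omega) hij)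
  rw [val_sideVertex, val_sideVertex] at h
  exact Fin.ext (by omega)

lemma IsDistinguishing.lt_card_labels {m r : ℕ} [NeZero (m * 4)] {c : ZMod (m * 4) → Fin r}
    (hc : IsDistinguishing (circC m 4) c) : 2 * m < r := by
  by_contra! hr
  have hle : 2 * m ≤ r := by
    simpa using Fintype.card_le_of_injective _ (hc.injective_side 0)
  obtain rfl : r = 2 * m := le_antisymm hr hle
  have hpartner : ∀ v : ZMod (m * 4), ∃ w : ZMod (m * 4), w.val % 2 ≠ v.val % 2 ∧ c w = c v := by
    intro v
    obtain ⟨i, hi⟩ := Finite.surjective_of_injective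
      (hc.injective_side ⟨1 - v.val % 2, by omega⟩) (c v)
    refine ⟨_, ?_, hi⟩
    rw [val_sideVertex]
    dsimp only
    omega
  choose g hg hgc using hpartner
  have hinv : Function.Involutive g := fun v => by
    have h1 := hg v
    have h2 := hg (g v)
    exact hc.inj_on_side (by omega) (by rw [hgc, hgc])
  have hid := hc hinv.toPerm
    (fun u v => by
      rw [circC_adj_iff_s10, circC_adj_iff_s10, Function.Involutive.coe_toPerm]
      have h1 := hg u
      have h2 := hg v
      omega) hgc
  have h0 : g 0 = 0 := congrArg (fun e : Equiv.Perm _ => e 0) hid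
  exact hg 0 (by rw [h0])

/-- Numbers the even vertices from `0` and the odd vertices from `1`. -/
def shiftLabeling (m : ℕ) [NeZero (m * 4)] (v : ZMod (m * 4)) : Fin (2 * m + 1) :=
  ⟨v.val / 2 + v.val % 2, by have := ZMod.val_lt v; omega⟩

lemma isDistinguishing_shiftLabeling (m : ℕ) [NeZero (m * 4)] :
    IsDistinguishing (circC m 4) (shiftLabeling m) := by
  intro σ hσ hc
  have hc' : ∀ v, (σ v).val / 2 + (σ v).val % 2 = v.val / 2 + v.val % 2 :=
    fun v => congrArg Fin.val (hc v)
  have h0 : (σ 0).val = 0 := by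
    have := hc' 0
    rw [ZMod.val_zero] at this
    omega
  ext v
  have hadj := hσ 0 v
  rw [circC_adj_iff_s10, circC_adj_iff_s10, h0, ZMod.val_zero] at hadj
  have hv := hc' v
  exact ZMod.val_injective _ (by rw [Equiv.refl_apply]; omega)

theorem stmt_10 (m : ℕ) (hm : 2 ≤ m) :
    distinguishingNumber (circC m 4) = 2 * m + 1 := by
  have : NeZero (m * 4) := ⟨by omega⟩
  have hmem : 2 * m + 1 ∈ {r : ℕ | ∃ c : ZMod (m * 4) → Fin r, IsDistinguishing (circC m 4) c} :=
    ⟨_, isDistinguishing_shiftLabeling m⟩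
  refine le_antisymm (Nat.sInf_le hmem) (le_csInf ⟨_, hmem⟩ ?_)
  rintro r ⟨c, hc⟩
  exact hc.lt_card_labels
end

section
/- Let m ≥ 2 and p ≥ 2 be integers. If a vertex labeling c of the circulant graph C(m,p) assigns the same label to two distinct vertices belonging to the same set M_i = {i + r·p : 0 ≤ r ≤ m−1} for some 0 ≤ i ≤ p−1, then c is not a distinguishing labeling, i.e. there exists a nontrivial automorphism σ of C(m,p) with c ∘ σ = c. -/
theorem jumpSet_add_mul {m p : ℕ} (hm : 2 ≤ m) {a : ZMod (m * p)} (ha : a ∈ jumpSet m p)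
    (t : ℕ) : a + ((t * p : ℕ) : ZMod (m * p)) ∈ jumpSet m p := by
  obtain ⟨r, -, hr⟩ := ha
  have key : ((r * p : ℕ) : ZMod (m * p)) + ((t * p : ℕ) : ZMod (m * p))
      = (((r + t) % m * p : ℕ) : ZMod (m * p)) := by
    rw [← Nat.cast_add, ZMod.natCast_eq_natCast_iff, ← add_mul]
    exact ((Nat.mod_modEq (r + t) m).mul_right' p).symm
  refine ⟨(r + t) % m, Nat.mod_lt _ (by omega), ?_⟩
  rcases hr with rfl | rfl
  · left
    rw [Nat.cast_add, add_assoc, key, ← Nat.cast_add]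
  · right
    rw [Nat.cast_add, add_assoc, key, ← Nat.cast_add]

theorem exists_eq_add_mul_of_mem_Mset {m p i : ℕ} {u v : ZMod (m * p)}
    (hu : u ∈ Mset m p i) (hv : v ∈ Mset m p i) :
    ∃ t : ℕ, v = u + ((t * p : ℕ) : ZMod (m * p)) := by
  obtain ⟨r, hr, rfl⟩ := hu
  obtain ⟨s, -, rfl⟩ := hv
  -- `t ≡ s - r` modulo `m`, kept nonnegative by adding `m`
  refine ⟨s + (m - r), ?_⟩
  have h0 : ((m * p : ℕ) : ZMod (m * p)) = 0 := ZMod.natCast_self _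
  have h1 : i + r * p + (s + (m - r)) * p = i + s * p + m * p := by
    obtain ⟨d, rfl⟩ := Nat.exists_eq_add_of_lt hr
    have : r + d + 1 - r = d + 1 := by omega
    rw [this]
    ring
  rw [← Nat.cast_add, h1, Nat.cast_add (i + s * p), h0, add_zero]

theorem circC_adj_of_mem_Mset {m p i : ℕ} (hm : 2 ≤ m) {u v w : ZMod (m * p)}
    (hu : u ∈ Mset m p i) (hv : v ∈ Mset m p i) (hwv : w ≠ v)
    (h : (circC m p).Adj u w) : (circC m p).Adj v w := by
  obtain ⟨t, ht⟩ := exists_eq_add_mul_of_mem_Mset hu hv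
  obtain ⟨k, hk⟩ := exists_eq_add_mul_of_mem_Mset hv hu
  simp only [circC, SimpleGraph.circulantGraph_adj] at h ⊢
  refine ⟨hwv.symm, h.2.imp (fun h1 => ?_) (fun h1 => ?_)⟩
  · have e : v - w = u - w + ((t * p : ℕ) : ZMod (m * p)) := by rw [ht]; ring
    rw [e]
    exact jumpSet_add_mul hm h1 t
  · have e : w - v = w - u + ((k * p : ℕ) : ZMod (m * p)) := by rw [hk]; ring
    rw [e]
    exact jumpSet_add_mul hm h1 k

/-- Transposing two twin vertices is an automorphism. -/
theorem isGraphAut_swap {V : Type*} [DecidableEq V] (G : SimpleGraph V) {u v : V}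
    (h : ∀ w, w ≠ u → w ≠ v → (G.Adj u w ↔ G.Adj v w)) : IsGraphAut G (Equiv.swap u v) := by
  intro x y
  have h' : ∀ w, w ≠ u → w ≠ v → (G.Adj w u ↔ G.Adj w v) := fun w h1 h2 => by
    rw [G.adj_comm w u, G.adj_comm w v, h w h1 h2]
  have hc := G.adj_comm u v
  simp only [Equiv.swap_apply_def]
  split_ifs <;> subst_vars <;> simp_all

theorem stmt_15 (m p : ℕ) (hm : 2 ≤ m) (hp : 2 ≤ p) (c : ZMod (m * p) → ℕ)
    (h : ∃ i < p, ∃ u ∈ Mset m p i, ∃ v ∈ Mset m p i, u ≠ v ∧ c u = c v) :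
    ∃ σ : Equiv.Perm (ZMod (m * p)), IsGraphAut (circC m p) σ ∧
      σ ≠ Equiv.refl (ZMod (m * p)) ∧ ∀ v, c (σ v) = c v := by
  classical
  obtain ⟨i, -, u, hu, v, hv, huv, hc⟩ := h
  refine ⟨Equiv.swap u v, isGraphAut_swap _ fun w hwu hwv =>
    ⟨circC_adj_of_mem_Mset hm hu hv hwv, circC_adj_of_mem_Mset hm hv hu hwu⟩, ?_, fun w => ?_⟩
  · exact fun h => huv (Equiv.swap_eq_refl_iff.mp h)
  · rw [Equiv.swap_apply_def]
    split_ifs <;> simp_all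
end
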